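/- arXiv:1005.2822 — 2 statements merged into one kernel-verified Lean document; each statement's English description precedes it below -/
import Mathlib

section
/- Let P_{ij} ∈ ℝ² (0 ≤ i,j ≤ 3) be the control points of a planar cubic Bézier tensor-product patch, and define the 36 quantities T_{pq} (0 ≤ p,q ≤ 5) by T_{pq} = Σ_{i+k=p} Σ_{j+ℓ=q} (U_{i,j} × V_{k,ℓ}) C(2,i) C(3,k) C(3,j) C(2,ℓ) with U_{i,j} = P_{i+1,j} − P_{i,j} and V_{i,j} = P_{i,j+1} − P_{i,j}. If T_{pq} > 0 for all 0 ≤ p,q ≤ 5, then the Jacobian satisfies J(u,v) > 0 for all (u,v) ∈ [0,1] × [0,1]. -/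
open scoped BigOperators

/-- The cubic Bernstein polynomial `B_i(u) = C(3,i) u^i (1-u)^(3-i)`. -/
noncomputable def bern (i : ℕ) (u : ℝ) : ℝ :=
  (Nat.choose 3 i : ℝ) * u ^ i * (1 - u) ^ (3 - i)

/-- The derivative `B_i'` of the cubic Bernstein polynomial. -/
noncomputable def bern' (i : ℕ) : ℝ → ℝ := deriv (bern i)

/-- The 2D scalar cross product `p × q = p_x q_y − p_y q_x`. -/
def cross (p q : ℝ × ℝ) : ℝ := p.1 * q.2 - p.2 * q.1

/-- The planar cubic Bézier tensor-product patch with control points `P i j`. -/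
noncomputable def patch (P : Fin 4 → Fin 4 → ℝ × ℝ) (u v : ℝ) : ℝ × ℝ :=
  ∑ i : Fin 4, ∑ j : Fin 4, (bern i u * bern j v) • P i j

/-- The Jacobian `J(u,v) = x_u y_v − y_u x_v` of the patch with control points `P i j`. -/
noncomputable def jacobian (P : Fin 4 → Fin 4 → ℝ × ℝ) (u v : ℝ) : ℝ :=
    deriv (fun u' => (patch P u' v).1) u * deriv (fun v' => (patch P u v').2) v
  - deriv (fun u' => (patch P u' v).2) u * deriv (fun v' => (patch P u v').1) v

/-!
The two partial derivatives of the patch are again Bézier patches, up to positive factors, with the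
edges of the control net as control points. In the scaled Bernstein basis
`t ^ i * (1 - t) ^ (n - i)` a bilinear map acts on coefficients by convolution, so the `T p q` are,
up to a positive factor, the coefficients of the Jacobian in the tensor-product scaled basis. These
basis functions are nonnegative on the unit square, and at each of its points one of the four
attached to the corners is positive.
-/

section ScaledBernstein

variable {R M N L : Type*} [CommRing R] [AddCommMonoid M] [Module R M] [AddCommMonoid N]
  [Module R N] [AddCommMonoid L] [Module R L] {m n : ℕ}

/-- The value at `t` of the polynomial with coefficients `c` in the scaled Bernstein basis
`t ^ i * (1 - t) ^ (n - i)` (no binomial factor), as a linear map in `c`. The coefficients lie in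
any module; taking them in a function space gives tensor-product forms by iteration. -/
def scaledBernstein (t : R) : (Fin (n + 1) → M) →ₗ[R] M :=
  ∑ i : Fin (n + 1), (t ^ (i : ℕ) * (1 - t) ^ (n - i)) • LinearMap.proj i

lemma scaledBernstein_apply (t : R) (c : Fin (n + 1) → M) :
    scaledBernstein t c = ∑ i : Fin (n + 1), (t ^ (i : ℕ) * (1 - t) ^ (n - i)) • c i := by
  simp [scaledBernstein]

lemma scaledBernstein_single (t : R) (i : Fin (n + 1)) (x : M) :
    scaledBernstein t (Pi.single i x) = (t ^ (i : ℕ) * (1 - t) ^ (n - i)) • x := by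
  simp [scaledBernstein_apply, Pi.single_apply]

/-- The convolution `p ↦ ∑ i + k = p, B (c i) (d k)` of two coefficient sequences along a bilinear
map `B`. It is itself bilinear, so `convolution (convolution B)` is the convolution of doubly
indexed families. -/
def convolution (B : M →ₗ[R] N →ₗ[R] L) :
    (Fin (m + 1) → M) →ₗ[R] (Fin (n + 1) → N) →ₗ[R] (Fin (m + n + 1) → L) :=
  ∑ i : Fin (m + 1), ∑ k : Fin (n + 1),
    (B.compl₁₂ (LinearMap.proj i) (LinearMap.proj k)).compr₂
      (LinearMap.single R (fun _ => L) ⟨i + k, by omega⟩)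

lemma convolution_eq_sum_single (B : M →ₗ[R] N →ₗ[R] L) (c : Fin (m + 1) → M)
    (d : Fin (n + 1) → N) :
    convolution B c d = ∑ i, ∑ k, Pi.single ⟨i + k, by omega⟩ (B (c i) (d k)) := by
  simp [convolution, LinearMap.sum_apply]

lemma convolution_apply (B : M →ₗ[R] N →ₗ[R] L) (c : Fin (m + 1) → M) (d : Fin (n + 1) → N)
    (p : Fin (m + n + 1)) :
    convolution B c d p =
      ∑ i : Fin (m + 1), ∑ k : Fin (n + 1),
        if (i : ℕ) + (k : ℕ) = (p : ℕ) then B (c i) (d k) else 0 := by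
  simp [convolution_eq_sum_single, Pi.single_apply, Fin.ext_iff, eq_comm]

theorem map_scaledBernstein_scaledBernstein (B : M →ₗ[R] N →ₗ[R] L) (t : R)
    (c : Fin (m + 1) → M) (d : Fin (n + 1) → N) :
    B (scaledBernstein t c) (scaledBernstein t d) = scaledBernstein t (convolution B c d) := by
  rw [convolution_eq_sum_single, scaledBernstein_apply t c, scaledBernstein_apply t d]
  simp only [map_sum, LinearMap.sum_apply, map_smul, LinearMap.smul_apply, scaledBernstein_single,
    Finset.smul_sum, smul_smul]
  rw [Finset.sum_comm]
  refine Finset.sum_congr rfl fun i _ => Finset.sum_congr rfl fun k _ => ?_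
  have degree_split : m + n - ((i : ℕ) + (k : ℕ)) = (m - i) + (n - k) := by omega
  rw [degree_split, pow_add, pow_add]
  congr 1
  ring

theorem map_scaledBernstein₂_scaledBernstein₂ {m' n' : ℕ} (B : M →ₗ[R] N →ₗ[R] L) (u v : R)
    (c : Fin (m + 1) → Fin (m' + 1) → M) (d : Fin (n + 1) → Fin (n' + 1) → N) :
    B (scaledBernstein v (scaledBernstein u c)) (scaledBernstein v (scaledBernstein u d)) =
      scaledBernstein v (scaledBernstein u (convolution (convolution B) c d)) := by
  rw [map_scaledBernstein_scaledBernstein B, map_scaledBernstein_scaledBernstein (convolution B)]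

end ScaledBernstein

section Positivity

variable {R : Type*} [CommRing R] [LinearOrder R] [IsStrictOrderedRing R] {m n : ℕ} {t : R}

lemma scaledBernstein_nonneg {c : Fin (n + 1) → R} (hc : ∀ i, 0 ≤ c i) (ht : t ∈ Set.Icc 0 1) :
    0 ≤ scaledBernstein t c := by
  have : 0 ≤ 1 - t := sub_nonneg.2 ht.2
  have := ht.1
  rw [scaledBernstein_apply]
  exact Finset.sum_nonneg fun i _ => smul_nonneg (by positivity) (hc i)

lemma scaledBernstein_pos {c : Fin (n + 1) → R} (hc : ∀ i, 0 ≤ c i) (h_zero : 0 < c 0)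
    (h_last : 0 < c (Fin.last n)) (ht : t ∈ Set.Icc 0 1) : 0 < scaledBernstein t c := by
  have h0t := ht.1
  have h1t : 0 ≤ 1 - t := sub_nonneg.2 ht.2
  rw [scaledBernstein_apply]
  refine Finset.sum_pos' (fun i _ => smul_nonneg (by positivity) (hc i)) ?_
  rcases ht.2.lt_or_eq with h_lt | rfl
  · exact ⟨0, Finset.mem_univ _, by simpa using mul_pos (pow_pos (sub_pos.2 h_lt) n) h_zero⟩
  · exact ⟨Fin.last n, Finset.mem_univ _, by simpa using h_last⟩

theorem scaledBernstein₂_pos {c : Fin (m + 1) → Fin (n + 1) → R} (hc : ∀ p q, 0 ≤ c p q)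
    (h00 : 0 < c 0 0) (h01 : 0 < c 0 (Fin.last n)) (h10 : 0 < c (Fin.last m) 0)
    (h11 : 0 < c (Fin.last m) (Fin.last n)) {u v : R} (hu : u ∈ Set.Icc 0 1)
    (hv : v ∈ Set.Icc 0 1) : 0 < scaledBernstein v (scaledBernstein u c) := by
  have eval_apply (q : Fin (n + 1)) : scaledBernstein u c q = scaledBernstein u (c · q) := by
    simp [scaledBernstein_apply]
  refine scaledBernstein_pos (fun q => ?_) ?_ ?_ hv <;> rw [eval_apply]
  · exact scaledBernstein_nonneg (hc · q) hu
  · exact scaledBernstein_pos (hc · 0) h00 h10 hu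
  · exact scaledBernstein_pos (hc · (Fin.last n)) h01 h11 hu

end Positivity

section Bezier

variable {R M : Type*} [CommRing R] [AddCommMonoid M] [Module R M] {m n : ℕ}

/-- The point at parameter `t` of the Bézier curve of degree `n` with control points `c`, as a
linear map in the control polygon. -/
noncomputable def bezier (t : R) : (Fin (n + 1) → M) →ₗ[R] M :=
  ∑ i : Fin (n + 1), (bernsteinPolynomial R n i).eval t • LinearMap.proj i

lemma bezier_apply (t : R) (c : Fin (n + 1) → M) :
    bezier t c = ∑ i : Fin (n + 1), (bernsteinPolynomial R n i).eval t • c i := by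
  simp [bezier]

lemma bezier_eq_scaledBernstein (t : R) (c : Fin (n + 1) → M) :
    bezier t c = scaledBernstein t fun i => n.choose i • c i := by
  rw [bezier_apply, scaledBernstein_apply]
  refine Finset.sum_congr rfl fun i _ => ?_
  rw [← Nat.cast_smul_eq_nsmul R, smul_smul]
  simp only [bernsteinPolynomial, Polynomial.eval_mul, Polynomial.eval_natCast,
    Polynomial.eval_pow, Polynomial.eval_X, Polynomial.eval_sub, Polynomial.eval_one]
  congr 1
  ring

/-- The Bézier tensor-product patch of bidegree `(m, n)` with control net `P`. -/
noncomputable def bezierPatch (P : Fin (m + 1) → Fin (n + 1) → M) (u v : R) : M :=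
  bezier u fun i => bezier v (P i)

lemma bezierPatch_eq_sum (P : Fin (m + 1) → Fin (n + 1) → M) (u v : R) :
    bezierPatch P u v = ∑ i : Fin (m + 1), ∑ j : Fin (n + 1),
      ((bernsteinPolynomial R m i).eval u * (bernsteinPolynomial R n j).eval v) • P i j := by
  simp only [bezierPatch, bezier_apply, Finset.smul_sum, smul_smul]

lemma bezierPatch_swap (P : Fin (m + 1) → Fin (n + 1) → M) (u v : R) :
    bezierPatch (fun j i => P i j) v u = bezierPatch P u v := by
  rw [bezierPatch_eq_sum, bezierPatch_eq_sum, Finset.sum_comm]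
  simp only [mul_comm]

lemma bezierPatch_eq_scaledBernstein₂ (P : Fin (m + 1) → Fin (n + 1) → M) (u v : R) :
    bezierPatch P u v =
      scaledBernstein v (scaledBernstein u fun i j => (m.choose i * n.choose j) • P i j) := by
  rw [← bezierPatch_swap, bezierPatch]
  simp only [bezier_eq_scaledBernstein]
  congr 1
  ext j
  simp [scaledBernstein_apply, Finset.smul_sum, mul_smul, smul_comm (n.choose j)]

end Bezier

section Edges

variable {M : Type*} [AddCommGroup M] {n : ℕ}

/-- The edge vectors of a control polygon. For a control net, seen as a polygon of rows, these are
the edges in the first index. -/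
def edges (c : Fin (n + 2) → M) (i : Fin (n + 1)) : M := c i.succ - c i.castSucc

lemma sum_derivative_bernsteinPolynomial_smul {R : Type*} [CommRing R] [Module R M] (t : R)
    (c : Fin (n + 2) → M) :
    ∑ i : Fin (n + 2), (bernsteinPolynomial R (n + 1) i).derivative.eval t • c i =
      (n + 1 : R) • bezier t (edges c) := by
  have shift : ∑ i : Fin (n + 1), (bernsteinPolynomial R n i).eval t • c i.castSucc =
      (bernsteinPolynomial R n 0).eval t • c 0 +
        ∑ i : Fin (n + 1), (bernsteinPolynomial R n (i + 1)).eval t • c i.succ := by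
    have h := Fin.sum_univ_castSucc fun i : Fin (n + 2) => (bernsteinPolynomial R n i).eval t • c i
    rw [Fin.sum_univ_succ] at h
    simpa [bernsteinPolynomial.eq_zero_of_lt] using h.symm
  rw [bezier_apply, Fin.sum_univ_succ]
  simp only [edges, smul_sub, Finset.sum_sub_distrib, shift, Fin.val_succ, Fin.val_zero,
    bernsteinPolynomial.derivative_succ_aux, bernsteinPolynomial.derivative_zero,
    Polynomial.eval_mul, Polynomial.eval_sub, Polynomial.eval_add, Polynomial.eval_neg,
    Polynomial.eval_natCast, Polynomial.eval_one, mul_smul, sub_smul, ← Finset.smul_sum,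
    Nat.cast_add, Nat.cast_one, Nat.add_sub_cancel]
  module

end Edges

section Derivative

variable {𝕜 E : Type*} [NontriviallyNormedField 𝕜] [NormedAddCommGroup E] [NormedSpace 𝕜 E]
  {m n : ℕ}

theorem hasDerivAt_bezier (c : Fin (n + 2) → E) (t : 𝕜) :
    HasDerivAt (fun s => bezier s c) ((n + 1 : 𝕜) • bezier t (edges c)) t := by
  simp only [bezier_apply (n := n + 1), ← sum_derivative_bernsteinPolynomial_smul]
  exact HasDerivAt.fun_sum fun i _ => (Polynomial.hasDerivAt _ t).smul_const (c i)

lemma hasDerivAt_bezierPatch_left (P : Fin (m + 2) → Fin (n + 1) → E) (u v : 𝕜) :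
    HasDerivAt (fun s => bezierPatch P s v) ((m + 1 : 𝕜) • bezierPatch (edges P) u v) u := by
  have edges_row : (edges fun i => bezier v (P i)) = fun i => bezier v (edges P i) :=
    funext fun i => (map_sub (bezier v) (P i.succ) (P i.castSucc)).symm
  simpa only [bezierPatch, edges_row] using hasDerivAt_bezier (fun i => bezier v (P i)) u

lemma hasDerivAt_bezierPatch_right (P : Fin (m + 1) → Fin (n + 2) → E) (u v : 𝕜) :
    HasDerivAt (bezierPatch P u) ((n + 1 : 𝕜) • bezierPatch (fun i => edges (P i)) u v) v := by
  have h := hasDerivAt_bezierPatch_left (fun j i => P i j) v u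
  simp only [bezierPatch_swap P] at h
  rwa [← bezierPatch_swap]

end Derivative

section Jacobian

variable {m n : ℕ}

/-- `cross` as a bilinear map, so that `convolution` applies to it. -/
def crossBilin : ℝ × ℝ →ₗ[ℝ] ℝ × ℝ →ₗ[ℝ] ℝ :=
  LinearMap.mk₂ ℝ cross
    (fun _ _ _ => by simp only [cross, Prod.fst_add, Prod.snd_add]; ring)
    (fun _ _ _ => by simp only [cross, Prod.smul_fst, Prod.smul_snd, smul_eq_mul]; ring)
    (fun _ _ _ => by simp only [cross, Prod.fst_add, Prod.snd_add]; ring)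
    (fun _ _ _ => by simp only [cross, Prod.smul_fst, Prod.smul_snd, smul_eq_mul]; ring)

lemma crossBilin_apply (p q : ℝ × ℝ) : crossBilin p q = cross p q := rfl

/-- The Jacobian of a planar Bézier patch of arbitrary bidegree, as the cross product of its
partial derivatives. -/
noncomputable def bezierJacobian (P : Fin (m + 1) → Fin (n + 1) → ℝ × ℝ) (u v : ℝ) : ℝ :=
  cross (deriv (fun s => bezierPatch P s v) u) (deriv (bezierPatch P u) v)

/-- The quantity `T_{pq}` for a planar patch of bidegree `(m + 1, n + 1)`: the edge nets `U` and `V`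
are `edges P` and `fun k => edges (P k)`. -/
def jacobianCoeff (P : Fin (m + 2) → Fin (n + 2) → ℝ × ℝ) (p : Fin (m + (m + 1) + 1))
    (q : Fin (n + 1 + n + 1)) : ℝ :=
  ∑ i : Fin (m + 1), ∑ k : Fin (m + 2), ∑ j : Fin (n + 2), ∑ l : Fin (n + 1),
    if (i : ℕ) + (k : ℕ) = (p : ℕ) ∧ (j : ℕ) + (l : ℕ) = (q : ℕ) then
      cross (edges P i j) (edges (P k) l) * (m.choose i : ℝ) * ((m + 1).choose k : ℝ) *
        ((n + 1).choose j : ℝ) * (n.choose l : ℝ)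
    else 0

lemma jacobianCoeff_eq_convolution (P : Fin (m + 2) → Fin (n + 2) → ℝ × ℝ) :
    jacobianCoeff P = convolution (convolution crossBilin)
      (fun i j => (m.choose i * (n + 1).choose j) • edges P i j)
      (fun k l => ((m + 1).choose k * n.choose l) • edges (P k) l) := by
  ext p q
  simp only [convolution_apply, Finset.sum_apply, ite_apply, Pi.zero_apply, jacobianCoeff, ite_and]
  refine Finset.sum_congr rfl fun i _ => Finset.sum_congr rfl fun k _ => ?_
  split_ifs with h_index
  · refine Finset.sum_congr rfl fun j _ => Finset.sum_congr rfl fun l _ => ?_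
    congr 1
    -- kept apart from `nsmul_eq_mul`, which also fires in the ring `ℝ × ℝ`
    simp only [map_nsmul, LinearMap.smul_apply]
    simp only [crossBilin_apply, nsmul_eq_mul, Nat.cast_mul]
    ring
  · simp

theorem bezierJacobian_eq_scaledBernstein₂ (P : Fin (m + 2) → Fin (n + 2) → ℝ × ℝ) (u v : ℝ) :
    bezierJacobian P u v =
      (m + 1) * (n + 1) * scaledBernstein v (scaledBernstein u (jacobianCoeff P)) := by
  rw [bezierJacobian, (hasDerivAt_bezierPatch_left P u v).deriv,
    (hasDerivAt_bezierPatch_right P u v).deriv, ← crossBilin_apply, jacobianCoeff_eq_convolution,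
    ← map_scaledBernstein₂_scaledBernstein₂, bezierPatch_eq_scaledBernstein₂,
    bezierPatch_eq_scaledBernstein₂]
  simp only [map_smul, LinearMap.smul_apply, smul_eq_mul]
  ring

theorem jacobian_pos_of_T_pos_general (P : Fin (m + 2) → Fin (n + 2) → ℝ × ℝ)
    (h_nonneg : ∀ p q, 0 ≤ jacobianCoeff P p q) (h00 : 0 < jacobianCoeff P 0 0)
    (h01 : 0 < jacobianCoeff P 0 (Fin.last _)) (h10 : 0 < jacobianCoeff P (Fin.last _) 0)
    (h11 : 0 < jacobianCoeff P (Fin.last _) (Fin.last _)) {u v : ℝ} (hu : u ∈ Set.Icc 0 1)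
    (hv : v ∈ Set.Icc 0 1) : 0 < bezierJacobian P u v := by
  rw [bezierJacobian_eq_scaledBernstein₂]
  exact mul_pos (by positivity) (scaledBernstein₂_pos h_nonneg h00 h01 h10 h11 hu hv)

end Jacobian

lemma cross_deriv {f g : ℝ → ℝ × ℝ} {u v : ℝ} (hf : DifferentiableAt ℝ f u)
    (hg : DifferentiableAt ℝ g v) :
    cross (deriv f u) (deriv g v) =
      deriv (fun s => (f s).1) u * deriv (fun s => (g s).2) v -
        deriv (fun s => (f s).2) u * deriv (fun s => (g s).1) v := by
  have deriv_fst {h : ℝ → ℝ × ℝ} {t : ℝ} (hh : DifferentiableAt ℝ h t) :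
      deriv (fun s => (h s).1) t = (deriv h t).1 :=
    ((ContinuousLinearMap.fst ℝ ℝ ℝ).hasFDerivAt.comp_hasDerivAt t hh.hasDerivAt).deriv
  have deriv_snd {h : ℝ → ℝ × ℝ} {t : ℝ} (hh : DifferentiableAt ℝ h t) :
      deriv (fun s => (h s).2) t = (deriv h t).2 :=
    ((ContinuousLinearMap.snd ℝ ℝ ℝ).hasFDerivAt.comp_hasDerivAt t hh.hasDerivAt).deriv
  rw [deriv_fst hf, deriv_fst hg, deriv_snd hf, deriv_snd hg, cross]

lemma patch_eq_bezierPatch (P : Fin 4 → Fin 4 → ℝ × ℝ) (u v : ℝ) :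
    patch P u v = bezierPatch P u v := by
  have bern_eq_eval (i : ℕ) (t : ℝ) : bern i t = (bernsteinPolynomial ℝ 3 i).eval t := by
    simp [bern, bernsteinPolynomial]
  simp only [patch, bern_eq_eval, bezierPatch_eq_sum]

lemma jacobian_eq_bezierJacobian (P : Fin 4 → Fin 4 → ℝ × ℝ) (u v : ℝ) :
    jacobian P u v = bezierJacobian P u v := by
  simp only [jacobian, patch_eq_bezierPatch]
  exact (cross_deriv (hasDerivAt_bezierPatch_left P u v).differentiableAt
    (hasDerivAt_bezierPatch_right P u v).differentiableAt).symm

/-- if all 36 quantities `T_{pq}` are positive, the Jacobian is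
positive on the unit square. -/
theorem jacobian_pos_of_T_pos (P : Fin 4 → Fin 4 → ℝ × ℝ)
    (U : Fin 3 → Fin 4 → ℝ × ℝ) (V : Fin 4 → Fin 3 → ℝ × ℝ)
    (hU : ∀ i j, U i j = P i.succ j - P i.castSucc j)
    (hV : ∀ i j, V i j = P i j.succ - P i j.castSucc)
    (T : Fin 6 → Fin 6 → ℝ)
    (hT : ∀ p q, T p q =
      ∑ i : Fin 3, ∑ k : Fin 4, ∑ j : Fin 4, ∑ l : Fin 3,
        if (i : ℕ) + (k : ℕ) = (p : ℕ) ∧ (j : ℕ) + (l : ℕ) = (q : ℕ) then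
          cross (U i j) (V k l) *
            (Nat.choose 2 i : ℝ) * (Nat.choose 3 k : ℝ) *
            (Nat.choose 3 j : ℝ) * (Nat.choose 2 l : ℝ)
        else 0)
    (hpos : ∀ p q, 0 < T p q) :
    ∀ u ∈ Set.Icc (0:ℝ) 1, ∀ v ∈ Set.Icc (0:ℝ) 1, 0 < jacobian P u v := by
  obtain rfl : U = edges P := funext₂ hU
  obtain rfl : V = fun k => edges (P k) := funext₂ hV
  obtain rfl : T = jacobianCoeff P := funext₂ hT
  intro u hu v hv
  rw [jacobian_eq_bezierJacobian]
  exact jacobian_pos_of_T_pos_general P (fun p q => (hpos p q).le) (hpos _ _) (hpos _ _)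
    (hpos _ _) (hpos _ _) hu hv
end

section
/- Let A, B, C, D ∈ ℝ² be the vertices, in counterclockwise order, of a strictly convex quadrilateral, i.e. (B−A) × (C−B) > 0, (C−B) × (D−C) > 0, (D−C) × (A−D) > 0, and (A−D) × (B−A) > 0. Then the bilinear Coons patch σ(u,v) = (1−u)(1−v) A + u(1−v) B + u v C + (1−u) v D has strictly positive Jacobian J(u,v) = (∂x/∂u)(∂y/∂v) − (∂y/∂u)(∂x/∂v) on all of [0,1] × [0,1]; in particular, the Coons patch of a convex polygon is nondegenerate. -/
/-- The bilinear Coons patch of the quadrilateral `A B C D`. -/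
def bilin (A B C D : ℝ × ℝ) (u v : ℝ) : ℝ × ℝ :=
  ((1 - u) * (1 - v)) • A + (u * (1 - v)) • B + (u * v) • C + ((1 - u) * v) • D

/-- The Jacobian `J(u,v) = x_u y_v − y_u x_v` of a planar map `σ`. -/
noncomputable def jacobianOf (σ : ℝ → ℝ → ℝ × ℝ) (u v : ℝ) : ℝ :=
    deriv (fun u' => (σ u' v).1) u * deriv (fun v' => (σ u v').2) v
  - deriv (fun u' => (σ u' v).2) u * deriv (fun v' => (σ u v').1) v

/-!
The cross product is bilinear and each partial derivative of the patch interpolates linearly between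
two opposite edge vectors, so the Jacobian is the bilinear interpolation of its values at the four
corners. These are the cross products of consecutive edges, and an interpolation of positive numbers
is positive.
-/

open AffineMap

theorem cross_sub_eq_cross_swap (p q r : ℝ × ℝ) : cross p (q - r) = cross (r - q) p := by
  simp only [cross, Prod.fst_sub, Prod.snd_sub]
  ring

theorem cross_lineMap_left (p q r : ℝ × ℝ) (t : ℝ) :
    cross (lineMap p q t) r = lineMap (cross p r) (cross q r) t := by
  simp only [cross, lineMap_apply_module, Prod.fst_add, Prod.snd_add, Prod.smul_fst, Prod.smul_snd,
    smul_eq_mul]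
  ring

theorem cross_lineMap_right (p q r : ℝ × ℝ) (t : ℝ) :
    cross p (lineMap q r t) = lineMap (cross p q) (cross p r) t := by
  simp only [cross, lineMap_apply_module, Prod.fst_add, Prod.snd_add, Prod.smul_fst, Prod.smul_snd,
    smul_eq_mul]
  ring

section DerivProd

variable {𝕜 E F : Type*} [NontriviallyNormedField 𝕜] [NormedAddCommGroup E] [NormedSpace 𝕜 E]
  [NormedAddCommGroup F] [NormedSpace 𝕜 F] {f : 𝕜 → E × F} {f' : E × F} {t : 𝕜}

theorem deriv_fst_of_hasDerivAt (hf : HasDerivAt f f' t) : deriv (fun s => (f s).1) t = f'.1 :=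
  ((ContinuousLinearMap.fst 𝕜 E F).hasFDerivAt.comp_hasDerivAt t hf).deriv

theorem deriv_snd_of_hasDerivAt (hf : HasDerivAt f f' t) : deriv (fun s => (f s).2) t = f'.2 :=
  ((ContinuousLinearMap.snd 𝕜 E F).hasFDerivAt.comp_hasDerivAt t hf).deriv

end DerivProd

theorem jacobianOf_eq_cross {σ : ℝ → ℝ → ℝ × ℝ} {u v : ℝ} {σu σv : ℝ × ℝ}
    (hu : HasDerivAt (fun u' => σ u' v) σu u) (hv : HasDerivAt (fun v' => σ u v') σv v) :
    jacobianOf σ u v = cross σu σv := by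
  rw [jacobianOf, cross, deriv_fst_of_hasDerivAt hu, deriv_snd_of_hasDerivAt hu,
    deriv_fst_of_hasDerivAt hv, deriv_snd_of_hasDerivAt hv]

section Bilin

variable (A B C D : ℝ × ℝ) (u v : ℝ)

theorem bilin_eq_lineMap_left :
    bilin A B C D u v = lineMap (lineMap A D v) (lineMap B C v) u := by
  simp only [bilin, lineMap_apply_module]
  module

theorem bilin_eq_lineMap_right :
    bilin A B C D u v = lineMap (lineMap A B u) (lineMap D C u) v := by
  simp only [bilin, lineMap_apply_module]
  module

theorem hasDerivAt_bilin_left :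
    HasDerivAt (fun u' => bilin A B C D u' v) (lineMap (B - A) (C - D) v) u := by
  simpa only [bilin_eq_lineMap_left, ← vsub_eq_sub, lineMap_vsub_lineMap] using
    hasDerivAt_lineMap (a := lineMap A D v) (b := lineMap B C v) (x := u)

theorem hasDerivAt_bilin_right :
    HasDerivAt (fun v' => bilin A B C D u v') (lineMap (D - A) (C - B) u) v := by
  simpa only [bilin_eq_lineMap_right, ← vsub_eq_sub, lineMap_vsub_lineMap] using
    hasDerivAt_lineMap (a := lineMap A B u) (b := lineMap D C u) (x := v)

theorem jacobianOf_bilin :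
    jacobianOf (bilin A B C D) u v =
      lineMap (lineMap (cross (A - D) (B - A)) (cross (B - A) (C - B)) u)
        (lineMap (cross (D - C) (A - D)) (cross (C - B) (D - C)) u) v := by
  have corner_A : cross (B - A) (D - A) = cross (A - D) (B - A) := cross_sub_eq_cross_swap ..
  have corner_D : cross (C - D) (D - A) = cross (D - C) (A - D) :=
    (cross_sub_eq_cross_swap ..).trans (cross_sub_eq_cross_swap ..)
  have corner_C : cross (C - D) (C - B) = cross (C - B) (D - C) := (cross_sub_eq_cross_swap ..).symm
  calc jacobianOf (bilin A B C D) u v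
      = cross (lineMap (B - A) (C - D) v) (lineMap (D - A) (C - B) u) :=
        jacobianOf_eq_cross (hasDerivAt_bilin_left A B C D u v) (hasDerivAt_bilin_right A B C D u v)
    _ = lineMap (lineMap (cross (B - A) (D - A)) (cross (B - A) (C - B)) u)
          (lineMap (cross (C - D) (D - A)) (cross (C - D) (C - B)) u) v := by
        rw [cross_lineMap_left, cross_lineMap_right, cross_lineMap_right]
    _ = _ := by rw [corner_A, corner_D, corner_C]

end Bilin

theorem lineMap_pos {𝕜 : Type*} [Field 𝕜] [LinearOrder 𝕜] [IsStrictOrderedRing 𝕜] {a b t : 𝕜}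
    (ha : 0 < a) (hb : 0 < b) (ht : t ∈ Set.Icc 0 1) : 0 < lineMap a b t :=
  (convex_Ioi (0 : 𝕜)).lineMap_mem ha hb ht

/-- the bilinear Coons patch of a strictly convex quadrilateral
(vertices in counterclockwise order) has strictly positive Jacobian on the unit
square; in particular it is nondegenerate. -/
theorem bilinear_coons_convex_nondegenerate (A B C D : ℝ × ℝ)
    (hAB : 0 < cross (B - A) (C - B)) (hBC : 0 < cross (C - B) (D - C))
    (hCD : 0 < cross (D - C) (A - D)) (hDA : 0 < cross (A - D) (B - A)) :
    ∀ u ∈ Set.Icc (0:ℝ) 1, ∀ v ∈ Set.Icc (0:ℝ) 1,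
      0 < jacobianOf (bilin A B C D) u v := by
  intro u hu v hv
  rw [jacobianOf_bilin]
  exact lineMap_pos (lineMap_pos hDA hAB hu) (lineMap_pos hCD hBC hu) hv
end
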